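/- Let d ∈ ℕ, let ρ*(t) = 1 + 2·cos( (1/3)·arccos(2t−1) + 4π/3 ), let ρ_d*(t) = ∏_{j=1}^d ρ*(t_j) on [0,1]^d, let t_1,…,t_N be i.i.d. with law ρ_d*(t)dt, and use weights a_k = 1/(N ρ_d*(t_k)). Then limsup_{N→∞} N^{1/2} · 2^d · E[∫_{[0,1]^d} |Δ(x)| dx] ≤ √(2/π) · (3/2)^{d/2}. -/

import Mathlib

open MeasureTheory Filter

open ProbabilityTheory Set
open scoped Topology Real

/-!
Write `Δ(x) = N⁻¹ ∑ₖ f(x, tₖ) / g(tₖ) - ∫ f(x, ·)`, where `f(x, ·)` is the indicator of `[0, x)` and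
`g` the density of the sample. By the central limit theorem `√N Δ(x)` tends in distribution to a
centered Gaussian of variance `σ(x)² = ∫ f(x, ·)² / g - (∫ f(x, ·))²`, and as its second moments are
at most `σ(x)²`, also `√N 𝔼|Δ(x)| → √(2/π) σ(x)`. Since `√N 𝔼|Δ(x)| ≤ σ(x)`, dominated convergence
gives `√N 𝔼 ∫ |Δ| → √(2/π) ∫ σ`.

For a product density, `σ(x)² ≤ ∏ⱼ ∫_0^{xⱼ} 1/ρ`, so `∫ σ ≤ (∫_0^1 √(∫_0^x 1/ρ) dx)^d`. Finally
`ρ*` is the inverse of the cubic `s ↦ (s - 2)² (s + 1) / 4`, hence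
`∫_0^x 1/ρ* = 3/8 (2 - ρ*(x))²` and `∫_0^1 √(∫_0^x 1/ρ*) dx = √(3/8)`.
-/

section AbsoluteMoment

lemma integral_abs_gaussianReal_zero_one : ∫ z, |z| ∂gaussianReal 0 1 = √(2 / π) := by
  let radial : ℝ → ℝ := fun y ↦ (√(2 * π))⁻¹ * (y ^ (1 : ℝ) * Real.exp (-(1 / 2) * y ^ (2 : ℝ)))
  have pdf_mul_abs (x : ℝ) : gaussianPDFReal 0 1 x • |x| = radial |x| := by
    simp only [gaussianPDFReal, radial, NNReal.coe_one, mul_one, sub_zero, smul_eq_mul,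
      Real.rpow_one, Real.rpow_ofNat, sq_abs]
    ring_nf
  have radial_integral : ∫ y in Ioi 0, radial y = (√(2 * π))⁻¹ := by
    rw [integral_const_mul, integral_rpow_mul_exp_neg_mul_rpow two_pos (by norm_num) (by norm_num)]
    norm_num [Real.rpow_neg_one]
  rw [integral_gaussianReal_eq_integral_smul one_ne_zero]
  simp_rw [pdf_mul_abs]
  rw [integral_comp_abs, radial_integral, Real.sqrt_div zero_le_two, Real.sqrt_mul zero_le_two]
  field_simp
  norm_num

lemma integral_abs_gaussianReal (v : NNReal) :
    ∫ z, |z| ∂gaussianReal 0 v = √(2 / π) * √v := by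
  have scaled_law : (gaussianReal 0 1).map (√v * ·) = gaussianReal 0 v := by
    rw [gaussianReal_map_const_mul, mul_zero]
    congr 1
    ext
    simp
  rw [← scaled_law, integral_map (by fun_prop) (by fun_prop)]
  simp_rw [abs_mul, integral_const_mul, integral_abs_gaussianReal_zero_one,
    abs_of_nonneg (Real.sqrt_nonneg _), mul_comm]

variable {Ω : Type*} [MeasurableSpace Ω] {P : Measure Ω} [IsProbabilityMeasure P]

lemma integral_abs_le_sqrt_integral_sq {X : Ω → ℝ} (hX : MemLp X 2 P) :
    ∫ ω, |X ω| ∂P ≤ √(∫ ω, X ω ^ 2 ∂P) := by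
  have variance_abs := variance_eq_sub hX.abs
  simp only [Pi.pow_apply, Pi.abs_apply, sq_abs] at variance_abs
  exact Real.le_sqrt_of_sq_le (by linarith [variance_nonneg |X| P])

lemma abs_sub_min_le_sq_div (x : ℝ) {M : ℝ} (hM : 0 < M) : |x| - min |x| M ≤ x ^ 2 / M := by
  rcases le_total |x| M with hx | hx
  · rw [min_eq_left hx, sub_self]
    positivity
  · rw [min_eq_right hx, le_div_iff₀ hM, ← sq_abs]
    nlinarith [abs_nonneg x]

lemma dist_integral_abs_integral_min_le {X : Ω → ℝ} (hX : MemLp X 2 P) {B M : ℝ}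
    (hB : ∫ ω, X ω ^ 2 ∂P ≤ B) (hM : 0 < M) :
    dist (∫ ω, |X ω| ∂P) (∫ ω, min |X ω| M ∂P) ≤ B / M := by
  have abs_integrable : Integrable (fun ω ↦ |X ω|) P := (hX.integrable one_le_two).abs
  have min_integrable : Integrable (fun ω ↦ min |X ω| M) P :=
    abs_integrable.inf (integrable_const M)
  calc dist (∫ ω, |X ω| ∂P) (∫ ω, min |X ω| M ∂P)
    _ = ∫ ω, (|X ω| - min |X ω| M) ∂P := by
      rw [Real.dist_eq, ← integral_sub abs_integrable min_integrable,
        abs_of_nonneg (integral_nonneg fun ω ↦ sub_nonneg.2 (min_le_left _ _))]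
    _ ≤ ∫ ω, X ω ^ 2 / M ∂P :=
      integral_mono (abs_integrable.sub min_integrable) (hX.integrable_sq.div_const M)
        fun ω ↦ abs_sub_min_le_sq_div (X ω) hM
    _ ≤ B / M := by
      rw [integral_div]
      gcongr

end AbsoluteMoment

section ConvergenceInDistribution

variable {ι : Type*} {l : Filter ι} {Ω : ι → Type*} [∀ i, MeasurableSpace (Ω i)]
  {P : ∀ i, Measure (Ω i)} [∀ i, IsProbabilityMeasure (P i)]
  {Ω' : Type*} [MeasurableSpace Ω'] {P' : Measure Ω'} [IsProbabilityMeasure P']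
  {X : ∀ i, Ω i → ℝ} {Z : Ω' → ℝ}

lemma tendsto_integral_min_abs_of_tendstoInDistribution (h : TendstoInDistribution X l Z P P')
    {M : ℝ} (hM : 0 ≤ M) :
    Tendsto (fun i ↦ ∫ ω, min |X i ω| M ∂P i) l (𝓝 (∫ ω, min |Z ω| M ∂P')) := by
  let truncatedAbs : BoundedContinuousFunction ℝ ℝ :=
    .ofNormedAddCommGroup (fun z ↦ min |z| M) (by fun_prop) M fun z ↦ by
      rw [Real.norm_of_nonneg (by positivity)]
      exact min_le_right _ _
  have weak_convergence :=
    ProbabilityMeasure.tendsto_iff_forall_integral_tendsto.1 h.tendsto truncatedAbs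
  simp only [ProbabilityMeasure.coe_mk, integral_map h.aemeasurable_limit
    truncatedAbs.continuous.aestronglyMeasurable, fun i ↦ integral_map (h.forall_aemeasurable i)
    truncatedAbs.continuous.aestronglyMeasurable] at weak_convergence
  exact weak_convergence

/-- Bounded second moments make the tails `|X| - min |X| M` uniformly small in mean, so weak
convergence of the truncations suffices. -/
theorem tendsto_integral_abs_of_tendstoInDistribution (h : TendstoInDistribution X l Z P P')
    (hX : ∀ i, MemLp (X i) 2 (P i)) (hZ : MemLp Z 2 P') {C : ℝ}
    (hC : ∀ i, ∫ ω, X i ω ^ 2 ∂P i ≤ C) :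
    Tendsto (fun i ↦ ∫ ω, |X i ω| ∂P i) l (𝓝 (∫ ω, |Z ω| ∂P')) := by
  let B := max (max C (∫ ω, Z ω ^ 2 ∂P')) 1
  have B_pos : 0 < B := zero_lt_one.trans_le (le_max_right _ _)
  have C_le_B : C ≤ B := (le_max_left _ _).trans (le_max_left _ _)
  refine Metric.tendsto_nhds.2 fun ε hε ↦ ?_
  let M := 3 * B / ε
  have M_pos : 0 < M := by positivity
  have B_div_M : B / M = ε / 3 := by simp only [M]; field_simp
  have dist_Z := dist_integral_abs_integral_min_le hZ (B := B) (by simp [B]) M_pos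
  filter_upwards [Metric.tendsto_nhds.1
    (tendsto_integral_min_abs_of_tendstoInDistribution h M_pos.le) (ε / 3) (by positivity)]
    with i dist_truncated
  have dist_X := dist_integral_abs_integral_min_le (hX i) ((hC i).trans C_le_B) M_pos
  rw [dist_comm] at dist_Z
  linarith [dist_triangle4 (∫ ω, |X i ω| ∂P i) (∫ ω, min |X i ω| M ∂P i)
    (∫ ω, min |Z ω| M ∂P') (∫ ω, |Z ω| ∂P')]

end ConvergenceInDistribution

section NormalizedSum

variable {E : Type*} [MeasurableSpace E] (Q : Measure E) [IsProbabilityMeasure Q]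

/-- The centered sum `(∑ k, Y (T k) - N 𝔼 Y) / √N` of the central limit theorem for a sample `T`
of size `N` from the law `Q`; it is `0` for `N = 0`. -/
noncomputable def normalizedSum (Y : E → ℝ) (N : ℕ) (T : Fin N → E) : ℝ :=
  (√N)⁻¹ * (∑ k, Y (T k) - N * ∫ t, Y t ∂Q)

variable {Q} {Y : E → ℝ}

lemma memLp_sum_eval (hY : MemLp Y 2 Q) (N : ℕ) :
    MemLp (fun T : Fin N → E ↦ ∑ k, Y (T k)) 2 (Measure.pi fun _ ↦ Q) :=
  memLp_finsetSum _ fun k _ ↦ hY.comp_measurePreserving (measurePreserving_eval (fun _ ↦ Q) k)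

lemma memLp_normalizedSum (hY : MemLp Y 2 Q) (N : ℕ) :
    MemLp (normalizedSum Q Y N) 2 (Measure.pi fun _ ↦ Q) :=
  ((memLp_sum_eval hY N).sub (memLp_const _)).const_mul _

lemma integral_normalizedSum (hY : MemLp Y 2 Q) (N : ℕ) :
    ∫ T, normalizedSum Q Y N T ∂(Measure.pi fun _ ↦ Q) = 0 := by
  have sum_integral : ∫ T : Fin N → E, ∑ k, Y (T k) ∂(Measure.pi fun _ ↦ Q) = N * ∫ t, Y t ∂Q := by
    rw [integral_finsetSum _ fun k _ ↦ integrable_comp_eval (hY.integrable one_le_two)]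
    simp [integral_comp_eval (μ := fun _ : Fin N ↦ Q) hY.aestronglyMeasurable]
  simp only [normalizedSum]
  rw [integral_const_mul, integral_sub ((memLp_sum_eval hY N).integrable one_le_two)
    (integrable_const _), sum_integral]
  simp

lemma variance_normalizedSum_le (hY : MemLp Y 2 Q) (N : ℕ) :
    Var[normalizedSum Q Y N; Measure.pi fun _ ↦ Q] ≤ Var[Y; Q] := by
  have variance_sum : Var[fun T : Fin N → E ↦ ∑ k, Y (T k); Measure.pi fun _ ↦ Q] =
      N * Var[Y; Q] := by
    have := variance_sum_pi (μ := fun _ : Fin N ↦ Q) (X := fun _ ↦ Y) fun _ ↦ hY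
    simpa [Finset.sum_fn] using this
  unfold normalizedSum
  rw [variance_const_mul, variance_sub_const (memLp_sum_eval hY N).aestronglyMeasurable,
    variance_sum, inv_pow, Real.sq_sqrt N.cast_nonneg, ← mul_assoc]
  exact mul_le_of_le_one_left (variance_nonneg _ _) (inv_mul_le_one (a := (N : ℝ)))

lemma integral_sq_normalizedSum_le (hY : MemLp Y 2 Q) (N : ℕ) :
    ∫ T, normalizedSum Q Y N T ^ 2 ∂(Measure.pi fun _ ↦ Q) ≤ Var[Y; Q] := by
  rw [← variance_of_integral_eq_zero (memLp_normalizedSum hY N).aemeasurable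
    (integral_normalizedSum hY N)]
  exact variance_normalizedSum_le hY N

lemma integral_abs_normalizedSum_le (hY : MemLp Y 2 Q) (N : ℕ) :
    ∫ T, |normalizedSum Q Y N T| ∂(Measure.pi fun _ ↦ Q) ≤ √Var[Y; Q] :=
  (integral_abs_le_sqrt_integral_sq (memLp_normalizedSum hY N)).trans
    (Real.sqrt_le_sqrt (integral_sq_normalizedSum_le hY N))

lemma tendstoInDistribution_normalizedSum (hYm : Measurable Y) (hY : MemLp Y 2 Q) :
    TendstoInDistribution (normalizedSum Q Y) atTop id (fun _ ↦ Measure.pi fun _ ↦ Q)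
      (gaussianReal 0 Var[Y; Q].toNNReal) := by
  let P := Measure.infinitePi fun _ : ℕ ↦ Q
  let X : ℕ → (ℕ → E) → ℝ := fun k ω ↦ Y (ω k)
  have eval_preserving (k : ℕ) : MeasurePreserving (fun ω : ℕ → E ↦ ω k) P Q :=
    measurePreserving_eval_infinitePi (fun _ ↦ Q) k
  have X_identDistrib (k : ℕ) : IdentDistrib (X k) Y P Q :=
    ⟨by fun_prop, by fun_prop, by
      rw [← (eval_preserving k).map_eq, Measure.map_map hYm (by fun_prop)]; rfl⟩
  have clt := tendstoInDistribution_inv_sqrt_mul_sum_sub (X := X) (P := P)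
    (P' := gaussianReal 0 Var[X 0; P].toNNReal) HasLaw.id
    (hY.comp_measurePreserving (eval_preserving 0)) (iIndepFun_infinitePi fun _ ↦ hYm)
    fun k ↦ (X_identDistrib k).trans (X_identDistrib 0).symm
  rw! [(X_identDistrib 0).variance_eq, (X_identDistrib 0).integral_eq] at clt
  have normalizedSum_measurable (N : ℕ) : Measurable (normalizedSum Q Y N) := by
    unfold normalizedSum
    fun_prop
  have initial_segment_law (N : ℕ) :
      P.map (fun ω (k : Fin N) ↦ ω k) = Measure.pi fun _ ↦ Q := by
    rw [Measure.map_infinitePi_infinitePi_of_inj (P := fun _ : ℕ ↦ Q)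
      (f := fun k : Fin N ↦ (k : ℕ)) Fin.val_injective, Measure.infinitePi_eq_pi]
  refine ⟨fun N ↦ (normalizedSum_measurable N).aemeasurable, by fun_prop, ?_⟩
  refine clt.tendsto.congr fun N ↦ Subtype.ext ?_
  change P.map _ = (Measure.pi fun _ ↦ Q).map _
  rw [← initial_segment_law, Measure.map_map (normalizedSum_measurable N) (by fun_prop)]
  simp only [X, Finset.sum_range]
  rfl

theorem tendsto_integral_abs_normalizedSum (hYm : Measurable Y) (hY : MemLp Y 2 Q) :
    Tendsto (fun N ↦ ∫ T, |normalizedSum Q Y N T| ∂(Measure.pi fun _ ↦ Q)) atTop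
      (𝓝 (√(2 / π) * √Var[Y; Q])) := by
  have gaussian_limit := tendsto_integral_abs_of_tendstoInDistribution
    (tendstoInDistribution_normalizedSum hYm hY) (memLp_normalizedSum hY)
    (memLp_id_gaussianReal 2) (integral_sq_normalizedSum_le hY)
  simpa only [id, integral_abs_gaussianReal, Real.coe_toNNReal _ (variance_nonneg Y Q)]
    using gaussian_limit

section Family

variable {X : Type*} [MeasurableSpace X] {κ : Measure X} {Y : X → E → ℝ}

lemma measurable_normalizedSum_uncurry (hYm : Measurable Y.uncurry) (N : ℕ) :
    Measurable fun p : X × (Fin N → E) ↦ normalizedSum Q (Y p.1) N p.2 := by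
  have mean_measurable : Measurable fun x ↦ ∫ t, Y x t ∂Q :=
    (StronglyMeasurable.integral_prod_right hYm.stronglyMeasurable).measurable
  have sample_measurable (k : Fin N) :
      Measurable fun p : X × (Fin N → E) ↦ Y p.1 (p.2 k) :=
    hYm.comp (f := fun p : X × (Fin N → E) ↦ (p.1, p.2 k)) (by fun_prop)
  exact ((Finset.measurable_fun_sum _ fun k _ ↦ sample_measurable k).sub
    ((mean_measurable.comp measurable_fst).const_mul _)).const_mul _

lemma stronglyMeasurable_integral_abs_normalizedSum (hYm : Measurable Y.uncurry) (N : ℕ) :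
    StronglyMeasurable fun x ↦ ∫ T, |normalizedSum Q (Y x) N T| ∂(Measure.pi fun _ ↦ Q) :=
  StronglyMeasurable.integral_prod_right (f := fun x T ↦ |normalizedSum Q (Y x) N T|)
    (measurable_normalizedSum_uncurry hYm N).norm.stronglyMeasurable

lemma integrable_prod_abs_normalizedSum [SFinite κ] (hYm : Measurable Y.uncurry)
    (hY : ∀ᵐ x ∂κ, MemLp (Y x) 2 Q) (hvar : Integrable (fun x ↦ √Var[Y x; Q]) κ) (N : ℕ) :
    Integrable (fun p : X × (Fin N → E) ↦ |normalizedSum Q (Y p.1) N p.2|)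
      (κ.prod (Measure.pi fun _ ↦ Q)) := by
  have abs_measurable : Measurable fun p : X × (Fin N → E) ↦ |normalizedSum Q (Y p.1) N p.2| :=
    (measurable_normalizedSum_uncurry hYm N).norm
  rw [integrable_prod_iff abs_measurable.aestronglyMeasurable]
  simp only [Real.norm_eq_abs, abs_abs]
  refine ⟨hY.mono fun x hx ↦ ((memLp_normalizedSum hx N).integrable one_le_two).abs, ?_⟩
  refine hvar.mono' (stronglyMeasurable_integral_abs_normalizedSum hYm N).aestronglyMeasurable ?_
  filter_upwards [hY] with x hx
  rw [Real.norm_of_nonneg (integral_nonneg fun T ↦ abs_nonneg _)]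
  exact integral_abs_normalizedSum_le hx N

theorem tendsto_integral_integral_abs_normalizedSum [SFinite κ] (hYm : Measurable Y.uncurry)
    (hY : ∀ᵐ x ∂κ, MemLp (Y x) 2 Q) (hvar : Integrable (fun x ↦ √Var[Y x; Q]) κ) :
    Tendsto (fun N ↦ ∫ T, ∫ x, |normalizedSum Q (Y x) N T| ∂κ ∂(Measure.pi fun _ ↦ Q)) atTop
      (𝓝 (√(2 / π) * ∫ x, √Var[Y x; Q] ∂κ)) := by
  simp_rw [fun N ↦ (integral_integral_swap (f := fun x T ↦ |normalizedSum Q (Y x) N T|)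
    (integrable_prod_abs_normalizedSum hYm hY hvar N)).symm, ← integral_const_mul]
  refine tendsto_integral_of_dominated_convergence (fun x ↦ √Var[Y x; Q])
    (fun N ↦ (stronglyMeasurable_integral_abs_normalizedSum hYm N).aestronglyMeasurable) hvar
    (fun N ↦ ?_) ?_
  · filter_upwards [hY] with x hx
    rw [Real.norm_of_nonneg (integral_nonneg fun T ↦ abs_nonneg _)]
    exact integral_abs_normalizedSum_le hx N
  · filter_upwards [hY] with x hx
    exact tendsto_integral_abs_normalizedSum hYm.of_uncurry_left hx

end Family

end NormalizedSum

section ProductDensity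

variable {ι : Type*} [Fintype ι] {E : ι → Type*} [∀ i, MeasurableSpace (E i)]
  {μ : ∀ i, Measure (E i)} [∀ i, SigmaFinite (μ i)]

lemma pi_withDensity_ofReal {g : ∀ i, E i → ℝ} (hg : ∀ i, Integrable (g i) (μ i))
    (hg0 : ∀ i t, 0 ≤ g i t) :
    (Measure.pi fun i ↦ (μ i).withDensity fun t ↦ ENNReal.ofReal (g i t)) =
      (Measure.pi μ).withDensity fun t ↦ ENNReal.ofReal (∏ i, g i (t i)) := by
  classical
  have (i : ι) : IsFiniteMeasure ((μ i).withDensity fun t ↦ ENNReal.ofReal (g i t)) :=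
    isFiniteMeasure_withDensity_ofReal (hg i).2
  refine Measure.pi_eq fun s hs ↦ ?_
  have prod_restrict : (Measure.pi μ).restrict (univ.pi s) =
      Measure.pi fun i ↦ (μ i).restrict (s i) := Measure.restrict_pi_pi _ _
  rw [withDensity_apply _ (MeasurableSet.univ_pi hs), prod_restrict,
    ← ofReal_integral_eq_lintegral_ofReal (Integrable.fintype_prod_dep fun i ↦ (hg i).restrict)
      (ae_of_all _ fun t ↦ Finset.prod_nonneg fun i _ ↦ hg0 i (t i)),
    integral_fintype_prod_eq_prod,
    ENNReal.ofReal_prod_of_nonneg fun i _ ↦ integral_nonneg (hg0 i)]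
  refine Finset.prod_congr rfl fun i _ ↦ ?_
  rw [withDensity_apply _ (hs i),
    ofReal_integral_eq_lintegral_ofReal (hg i).restrict (ae_of_all _ (hg0 i))]

end ProductDensity

section ImportanceSampling

variable {E : Type*} [MeasurableSpace E]

/-- `g` is a probability density with respect to `μ` that charges every `μ`-nonnull set, so that
the importance weights `1 / g` are finite almost everywhere. -/
structure IsSamplingDensity (μ : Measure E) (g : E → ℝ) : Prop where
  measurable : Measurable g
  nonneg : ∀ t, 0 ≤ g t
  ae_pos : ∀ᵐ t ∂μ, 0 < g t
  integral_eq_one : ∫ t, g t ∂μ = 1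

/-- The law `g dμ` of a single sample point. -/
noncomputable def samplingLaw (μ : Measure E) (g : E → ℝ) : Measure E :=
  μ.withDensity fun t ↦ ENNReal.ofReal (g t)

namespace IsSamplingDensity

variable {μ : Measure E} {g : E → ℝ}

lemma integrable (hg : IsSamplingDensity μ g) : Integrable g μ :=
  .of_integral_ne_zero (by simp [hg.integral_eq_one])

lemma isProbabilityMeasure_samplingLaw (hg : IsSamplingDensity μ g) :
    IsProbabilityMeasure (samplingLaw μ g) := ⟨by
  rw [samplingLaw, withDensity_apply _ .univ, Measure.restrict_univ,
    ← ofReal_integral_eq_lintegral_ofReal hg.integrable (ae_of_all _ hg.nonneg),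
    hg.integral_eq_one, ENNReal.ofReal_one]⟩

lemma integral_samplingLaw (hg : IsSamplingDensity μ g) (f : E → ℝ) :
    ∫ t, f t ∂samplingLaw μ g = ∫ t, g t * f t ∂μ := by
  rw [samplingLaw, integral_withDensity_eq_integral_toReal_smul
    hg.measurable.ennreal_ofReal (by simp)]
  simp [ENNReal.toReal_ofReal (hg.nonneg _)]

lemma integrable_samplingLaw_iff (hg : IsSamplingDensity μ g) {f : E → ℝ} :
    Integrable f (samplingLaw μ g) ↔ Integrable (fun t ↦ g t * f t) μ := by
  rw [samplingLaw, integrable_withDensity_iff_integrable_smul'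
    hg.measurable.ennreal_ofReal (by simp)]
  simp [ENNReal.toReal_ofReal (hg.nonneg _)]

lemma pi {ι : Type*} [Fintype ι] {E : ι → Type*} [∀ i, MeasurableSpace (E i)]
    {μ : ∀ i, Measure (E i)} [∀ i, SigmaFinite (μ i)] {g : ∀ i, E i → ℝ}
    (hg : ∀ i, IsSamplingDensity (μ i) (g i)) :
    IsSamplingDensity (Measure.pi μ) fun t ↦ ∏ i, g i (t i) where
  measurable := Finset.measurable_fun_prod _ fun i _ ↦
    (hg i).measurable.comp (measurable_pi_apply i)
  nonneg t := Finset.prod_nonneg fun i _ ↦ (hg i).nonneg (t i)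
  ae_pos := by
    filter_upwards [eventually_all.2 fun i ↦
      Measure.tendsto_eval_ae_ae.eventually (hg i).ae_pos] with t ht
    exact Finset.prod_pos fun i _ ↦ ht i
  integral_eq_one := by
    rw [integral_fintype_prod_eq_prod]
    exact Finset.prod_eq_one fun i _ ↦ (hg i).integral_eq_one

lemma integral_pi_samplingLaw [SigmaFinite μ] (hg : IsSamplingDensity μ g) {ι : Type*} [Fintype ι]
    (F : (ι → E) → ℝ) :
    ∫ T, F T ∂(Measure.pi fun _ ↦ samplingLaw μ g) =
      ∫ T, (∏ k, g (T k)) * F T ∂(Measure.pi fun _ ↦ μ) := by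
  have law_eq : (Measure.pi fun _ : ι ↦ samplingLaw μ g) =
      samplingLaw (Measure.pi fun _ ↦ μ) fun T ↦ ∏ k, g (T k) :=
    pi_withDensity_ofReal (fun _ ↦ hg.integrable) fun _ ↦ hg.nonneg
  rw [law_eq, (IsSamplingDensity.pi fun _ ↦ hg).integral_samplingLaw]

lemma integral_div_samplingLaw (hg : IsSamplingDensity μ g) (f : E → ℝ) :
    ∫ t, f t / g t ∂samplingLaw μ g = ∫ t, f t ∂μ := by
  rw [hg.integral_samplingLaw]
  refine integral_congr_ae (hg.ae_pos.mono fun t ht ↦ ?_)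
  exact mul_div_cancel₀ _ ht.ne'

lemma mul_div_sq_ae_eq (hg : IsSamplingDensity μ g) (f : E → ℝ) :
    (fun t ↦ g t * (f t / g t) ^ 2) =ᵐ[μ] fun t ↦ f t ^ 2 / g t :=
  hg.ae_pos.mono fun t ht ↦ by field_simp

lemma memLp_div_samplingLaw (hg : IsSamplingDensity μ g) {f : E → ℝ} (hf : Measurable f)
    (hfg : Integrable (fun t ↦ f t ^ 2 / g t) μ) :
    MemLp (fun t ↦ f t / g t) 2 (samplingLaw μ g) := by
  have weight_measurable : Measurable fun t ↦ f t / g t := hf.div hg.measurable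
  rw [memLp_two_iff_integrable_sq weight_measurable.aestronglyMeasurable,
    hg.integrable_samplingLaw_iff, integrable_congr (hg.mul_div_sq_ae_eq f)]
  exact hfg

lemma variance_div_samplingLaw (hg : IsSamplingDensity μ g) {f : E → ℝ} (hf : Measurable f)
    (hfg : Integrable (fun t ↦ f t ^ 2 / g t) μ) :
    Var[fun t ↦ f t / g t; samplingLaw μ g] = ∫ t, f t ^ 2 / g t ∂μ - (∫ t, f t ∂μ) ^ 2 := by
  have := hg.isProbabilityMeasure_samplingLaw
  rw [variance_eq_sub (hg.memLp_div_samplingLaw hf hfg), hg.integral_div_samplingLaw]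
  simp only [Pi.pow_apply]
  rw [hg.integral_samplingLaw, integral_congr_ae (hg.mul_div_sq_ae_eq f)]

lemma abs_normalizedSum_div_samplingLaw (hg : IsSamplingDensity μ g) (f : E → ℝ) {N : ℕ}
    (T : Fin N → E) :
    |normalizedSum (samplingLaw μ g) (fun t ↦ f t / g t) N T| =
      √N * |∑ k, 1 / (N * g (T k)) * f (T k) - ∫ t, f t ∂μ| := by
  rcases N.eq_zero_or_pos with rfl | N_pos
  · simp [normalizedSum]
  have sum_weights : ∑ k, 1 / (N * g (T k)) * f (T k) = (N : ℝ)⁻¹ * ∑ k, f (T k) / g (T k) := by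
    rw [Finset.mul_sum]
    exact Finset.sum_congr rfl fun k _ ↦ by rw [one_div, mul_inv]; ring
  rw [normalizedSum, hg.integral_div_samplingLaw, sum_weights,
    ← abs_of_nonneg (Real.sqrt_nonneg (N : ℝ)), ← abs_mul, abs_of_nonneg (Real.sqrt_nonneg (N : ℝ))]
  congr 1
  field_simp
  rw [Real.sq_sqrt N.cast_nonneg]

theorem tendsto_sqrt_mul_integral_abs_error [SigmaFinite μ] (hg : IsSamplingDensity μ g)
    {X : Type*} [MeasurableSpace X] {κ : Measure X} [SFinite κ] {f : X → E → ℝ}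
    (hf : Measurable f.uncurry) (hfg : ∀ᵐ x ∂κ, Integrable (fun t ↦ f x t ^ 2 / g t) μ)
    (hvar : Integrable (fun x ↦ √(∫ t, f x t ^ 2 / g t ∂μ - (∫ t, f x t ∂μ) ^ 2)) κ) :
    Tendsto (fun N : ℕ ↦ √N * ∫ T : Fin N → E, (∏ k, g (T k)) *
        ∫ x, |∑ k, 1 / (N * g (T k)) * f x (T k) - ∫ t, f x t ∂μ| ∂κ ∂(Measure.pi fun _ ↦ μ))
      atTop (𝓝 (√(2 / π) *
        ∫ x, √(∫ t, f x t ^ 2 / g t ∂μ - (∫ t, f x t ∂μ) ^ 2) ∂κ)) := by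
  have := hg.isProbabilityMeasure_samplingLaw
  have variance_eq : ∀ᵐ x ∂κ, √Var[fun t ↦ f x t / g t; samplingLaw μ g] =
      √(∫ t, f x t ^ 2 / g t ∂μ - (∫ t, f x t ∂μ) ^ 2) :=
    hfg.mono fun x hx ↦ by rw [hg.variance_div_samplingLaw hf.of_uncurry_left hx]
  have weights_measurable : Measurable (fun x t ↦ f x t / g t).uncurry :=
    hf.div (hg.measurable.comp measurable_snd)
  have weights_memLp : ∀ᵐ x ∂κ, MemLp (fun t ↦ f x t / g t) 2 (samplingLaw μ g) :=
    hfg.mono fun x hx ↦ hg.memLp_div_samplingLaw hf.of_uncurry_left hx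
  rw [← integral_congr_ae variance_eq]
  refine (tendsto_integral_integral_abs_normalizedSum weights_measurable weights_memLp
    (hvar.congr (variance_eq.mono fun _ h ↦ h.symm))).congr fun N ↦ ?_
  simp_rw [hg.abs_normalizedSum_div_samplingLaw, integral_const_mul, hg.integral_pi_samplingLaw]

end IsSamplingDensity

end ImportanceSampling

section BoxIndicator

variable {ι : Type*} [Fintype ι]

/-- The indicator `1_{[0,x)}(t)` of the anchored box as a function of its corner `x` and the
point `t`. Only the upper constraints `t j < x j` are recorded, since all points lie in the
support of the reference measure. -/
noncomputable def boxIndicator (x t : ι → ℝ) : ℝ :=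
  ∏ j, (Iio (x j)).indicator 1 (t j)

lemma boxIndicator_eq_ite (x t : ι → ℝ) [Decidable (∀ j, t j < x j)] :
    boxIndicator x t = if ∀ j, t j < x j then 1 else 0 := by
  classical
  simp [boxIndicator, indicator_apply, Finset.prod_ite_zero]

lemma measurable_boxIndicator_uncurry :
    Measurable (boxIndicator : (ι → ℝ) → (ι → ℝ) → ℝ).uncurry := by
  simp only [Function.uncurry_def, boxIndicator, indicator_apply, mem_Iio, Pi.one_apply]
  refine Finset.measurable_fun_prod _ fun j _ ↦ ?_
  exact .ite (measurableSet_lt (by fun_prop) (by fun_prop)) measurable_const measurable_const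

lemma sq_boxIndicator_div_prod (ρ : ℝ → ℝ) (x t : ι → ℝ) :
    boxIndicator x t ^ 2 / ∏ j, ρ (t j) =
      ∏ j, (Iio (x j)).indicator (fun s ↦ (ρ s)⁻¹) (t j) := by
  simp only [boxIndicator, ← Finset.prod_pow, ← Finset.prod_div_distrib]
  refine Finset.prod_congr rfl fun j _ ↦ ?_
  by_cases h : t j < x j <;> simp [h]

variable {μ : Measure ℝ} [SigmaFinite μ]

lemma integral_boxIndicator (x : ι → ℝ) :
    ∫ t, boxIndicator x t ∂(Measure.pi fun _ ↦ μ) = ∏ j, μ.real (Iio (x j)) := by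
  simp only [boxIndicator, integral_fintype_prod_eq_prod, integral_indicator_one measurableSet_Iio]

lemma integral_sq_boxIndicator_div_prod (ρ : ℝ → ℝ) (x : ι → ℝ) :
    ∫ t, boxIndicator x t ^ 2 / ∏ j, ρ (t j) ∂(Measure.pi fun _ ↦ μ) =
      ∏ j, ∫ s in Iio (x j), (ρ s)⁻¹ ∂μ := by
  simp only [sq_boxIndicator_div_prod, integral_fintype_prod_eq_prod,
    integral_indicator measurableSet_Iio]

lemma integrable_sq_boxIndicator_div_prod {ρ : ℝ → ℝ} (hρ : Integrable (fun s ↦ (ρ s)⁻¹) μ)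
    (x : ι → ℝ) :
    Integrable (fun t ↦ boxIndicator x t ^ 2 / ∏ j, ρ (t j)) (Measure.pi fun _ ↦ μ) := by
  simp only [sq_boxIndicator_div_prod]
  exact .fintype_prod fun j ↦ hρ.indicator measurableSet_Iio

end BoxIndicator

section WeightedDiscrepancy

variable {ι : Type*} [Fintype ι] {μ : Measure ℝ} {ρ : ℝ → ℝ}

lemma monotone_setIntegral_Iio {f : ℝ → ℝ} (hf : Integrable f μ) (hf0 : ∀ t, 0 ≤ f t) :
    Monotone fun x ↦ ∫ t in Iio x, f t ∂μ := fun _ _ hxy ↦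
  setIntegral_mono_set hf.integrableOn (ae_of_all _ hf0) (Iio_subset_Iio hxy).eventuallyLE

lemma sqrt_prod_setIntegral_sub_le (hρ0 : ∀ t, 0 ≤ ρ t) (x : ι → ℝ) (b : ℝ) :
    √(∏ j, ∫ t in Iio (x j), (ρ t)⁻¹ ∂μ - b ^ 2) ≤ ∏ j, √(∫ t in Iio (x j), (ρ t)⁻¹ ∂μ) := by
  rw [← Real.sqrt_prod _ fun j _ ↦ integral_nonneg fun t ↦ inv_nonneg.2 (hρ0 t)]
  exact Real.sqrt_le_sqrt (sub_le_self _ (sq_nonneg b))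

variable [IsFiniteMeasure μ]

lemma integrable_sqrt_setIntegral_Iio {f : ℝ → ℝ} (hf : Integrable f μ) (hf0 : ∀ t, 0 ≤ f t) :
    Integrable (fun x ↦ √(∫ t in Iio x, f t ∂μ)) μ := by
  refine Integrable.of_bound
    (monotone_setIntegral_Iio hf hf0).measurable.sqrt.aestronglyMeasurable (√(∫ t, f t ∂μ))
    (ae_of_all _ fun x ↦ ?_)
  rw [Real.norm_of_nonneg (Real.sqrt_nonneg _)]
  exact Real.sqrt_le_sqrt (setIntegral_le_integral hf (ae_of_all _ hf0))

lemma integrable_sqrt_prod_setIntegral_sub (hρ0 : ∀ t, 0 ≤ ρ t)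
    (hinv : Integrable (fun t ↦ (ρ t)⁻¹) μ) :
    Integrable (fun x : ι → ℝ ↦
        √(∏ j, ∫ t in Iio (x j), (ρ t)⁻¹ ∂μ - (∏ j, μ.real (Iio (x j))) ^ 2))
      (Measure.pi fun _ ↦ μ) := by
  have inv_ρ_nonneg (t : ℝ) : 0 ≤ (ρ t)⁻¹ := inv_nonneg.2 (hρ0 t)
  have second_moment_measurable :
      Measurable fun x : ι → ℝ ↦ ∏ j, ∫ t in Iio (x j), (ρ t)⁻¹ ∂μ :=
    Finset.measurable_fun_prod _ fun j _ ↦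
      (monotone_setIntegral_Iio hinv inv_ρ_nonneg).measurable.comp (measurable_pi_apply j)
  have distribution_monotone : Monotone fun x ↦ μ.real (Iio x) :=
    fun _ _ hxy ↦ measureReal_mono (Iio_subset_Iio hxy)
  have mean_measurable : Measurable fun x : ι → ℝ ↦ ∏ j, μ.real (Iio (x j)) :=
    Finset.measurable_fun_prod _ fun j _ ↦
      distribution_monotone.measurable.comp (measurable_pi_apply j)
  refine Integrable.mono' (.fintype_prod fun _ ↦ integrable_sqrt_setIntegral_Iio hinv inv_ρ_nonneg)
    (second_moment_measurable.sub (mean_measurable.pow_const 2)).sqrt.aestronglyMeasurable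
    (ae_of_all _ fun x ↦ ?_)
  rw [Real.norm_of_nonneg (Real.sqrt_nonneg _)]
  exact sqrt_prod_setIntegral_sub_le hρ0 x _

lemma integral_sqrt_prod_setIntegral_sub_le (hρ0 : ∀ t, 0 ≤ ρ t)
    (hinv : Integrable (fun t ↦ (ρ t)⁻¹) μ) :
    ∫ x : ι → ℝ, √(∏ j, ∫ t in Iio (x j), (ρ t)⁻¹ ∂μ - (∏ j, μ.real (Iio (x j))) ^ 2)
        ∂(Measure.pi fun _ ↦ μ) ≤
      (∫ x, √(∫ t in Iio x, (ρ t)⁻¹ ∂μ) ∂μ) ^ Fintype.card ι := by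
  rw [← integral_fintype_prod_eq_pow]
  exact integral_mono (integrable_sqrt_prod_setIntegral_sub hρ0 hinv)
    (.fintype_prod fun _ ↦ integrable_sqrt_setIntegral_Iio hinv fun t ↦ inv_nonneg.2 (hρ0 t))
    fun x ↦ sqrt_prod_setIntegral_sub_le hρ0 x _

theorem IsSamplingDensity.tendsto_sqrt_mul_integral_abs_discrepancy (hρ : IsSamplingDensity μ ρ)
    (hinv : Integrable (fun t ↦ (ρ t)⁻¹) μ) :
    Tendsto (fun N : ℕ ↦ √N * ∫ T : Fin N → ι → ℝ, (∏ k, ∏ j, ρ (T k j)) *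
        ∫ x, |∑ k, 1 / (N * ∏ j, ρ (T k j)) * boxIndicator x (T k) - ∏ j, μ.real (Iio (x j))|
          ∂(Measure.pi fun _ ↦ μ) ∂(Measure.pi fun _ ↦ Measure.pi fun _ ↦ μ))
      atTop (𝓝 (√(2 / π) *
        ∫ x : ι → ℝ, √(∏ j, ∫ t in Iio (x j), (ρ t)⁻¹ ∂μ - (∏ j, μ.real (Iio (x j))) ^ 2)
          ∂(Measure.pi fun _ ↦ μ))) := by
  have error_tendsto := (IsSamplingDensity.pi fun _ : ι ↦ hρ).tendsto_sqrt_mul_integral_abs_error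
    (κ := Measure.pi fun _ ↦ μ) measurable_boxIndicator_uncurry
    (ae_of_all _ (integrable_sq_boxIndicator_div_prod hinv))
  simp only [integral_boxIndicator, integral_sq_boxIndicator_div_prod] at error_tendsto
  exact error_tendsto (integrable_sqrt_prod_setIntegral_sub hρ.nonneg hinv)

end WeightedDiscrepancy

section UnitCube

lemma volume_restrict_Icc_pi {ι : Type*} [Fintype ι] {α : ι → Type*} [∀ i, MeasureSpace (α i)]
    [∀ i, SigmaFinite (volume : Measure (α i))] [∀ i, Preorder (α i)] (a b : ∀ i, α i) :
    (volume : Measure (∀ i, α i)).restrict (Icc a b) =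
      Measure.pi fun i ↦ volume.restrict (Icc (a i) (b i)) := by
  rw [← pi_univ_Icc, volume_pi, Measure.restrict_pi_pi]

lemma setIntegral_Iio_restrict_Icc (f : ℝ → ℝ) {x : ℝ} (hx : x ∈ Icc (0 : ℝ) 1) :
    ∫ t in Iio x, f t ∂(volume.restrict (Icc 0 1)) = ∫ t in 0..x, f t := by
  have inter_eq : Iio x ∩ Icc 0 1 = Ico 0 x := by
    ext t
    simp only [mem_inter_iff, mem_Iio, mem_Icc, mem_Ico]
    grind
  rw [Measure.restrict_restrict measurableSet_Iio, inter_eq, integral_Ico_eq_integral_Ioc,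
    intervalIntegral.integral_of_le hx.1]

lemma measureReal_restrict_Icc_Iio {x : ℝ} (hx : x ∈ Icc (0 : ℝ) 1) :
    (volume.restrict (Icc 0 1)).real (Iio x) = x := by
  simpa using setIntegral_Iio_restrict_Icc (fun _ ↦ 1) hx

/-- The mean `𝔼 ∫ |Δ(x)| dx` over `N` i.i.d. points with the product density
`∏ j, ρ (t j)` on the unit cube and weights `a_k = 1 / (N ∏ j, ρ (t_k j))`; the expectation is
written as an integral against the joint density of the points. -/
noncomputable def averageL1Discrepancy (ρ : ℝ → ℝ) (d N : ℕ) : ℝ :=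
  ∫ T in Icc (0 : Fin N → Fin d → ℝ) 1, (∏ k, ∏ j, ρ (T k j)) *
    ∫ x in Icc (0 : Fin d → ℝ) 1,
      |∑ k, 1 / (N * ∏ j, ρ (T k j)) * (if ∀ j, T k j < x j then (1 : ℝ) else 0) - ∏ j, x j|

lemma averageL1Discrepancy_eq (ρ : ℝ → ℝ) (d N : ℕ) :
    averageL1Discrepancy ρ d N =
      ∫ T : Fin N → Fin d → ℝ, (∏ k, ∏ j, ρ (T k j)) *
        ∫ x, |∑ k, 1 / (N * ∏ j, ρ (T k j)) * boxIndicator x (T k) -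
            ∏ j, (volume.restrict (Icc 0 1)).real (Iio (x j))|
          ∂(Measure.pi fun _ ↦ volume.restrict (Icc 0 1))
        ∂(Measure.pi fun _ ↦ Measure.pi fun _ ↦ volume.restrict (Icc 0 1)) := by
  have cube_measure : (Measure.pi fun _ : Fin d ↦ volume.restrict (Icc (0 : ℝ) 1)) =
      volume.restrict (Icc 0 1) := (volume_restrict_Icc_pi 0 1).symm
  have sample_measure : (Measure.pi fun _ : Fin N ↦ volume.restrict (Icc (0 : Fin d → ℝ) 1)) =
      volume.restrict (Icc 0 1) := (volume_restrict_Icc_pi 0 1).symm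
  rw [cube_measure, sample_measure, averageL1Discrepancy]
  congr! 3
  refine setIntegral_congr_fun measurableSet_Icc fun x hx ↦ ?_
  simp only [boxIndicator_eq_ite, measureReal_restrict_Icc_Iio ⟨hx.1 _, hx.2 _⟩]

lemma setIntegral_sqrt_setIntegral_Iio (f : ℝ → ℝ) :
    ∫ x in Icc 0 1, √(∫ t in Iio x, f t ∂(volume.restrict (Icc 0 1))) =
      ∫ x in Icc 0 1, √(∫ t in 0..x, f t) :=
  setIntegral_congr_fun measurableSet_Icc fun x hx ↦ by
    simp only [setIntegral_Iio_restrict_Icc f hx]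

theorem limsup_normalized_averageL1Discrepancy_le {ρ : ℝ → ℝ}
    (hρ : IsSamplingDensity (volume.restrict (Icc 0 1)) ρ)
    (hinv : IntegrableOn (fun t ↦ (ρ t)⁻¹) (Icc 0 1)) (d : ℕ) :
    limsup (fun N : ℕ ↦ √N * 2 ^ d * averageL1Discrepancy ρ d N) atTop ≤
      √(2 / π) * (2 * ∫ x in Icc 0 1, √(∫ t in 0..x, (ρ t)⁻¹)) ^ d := by
  have normalized_tendsto :=
    (hρ.tendsto_sqrt_mul_integral_abs_discrepancy (ι := Fin d) hinv).const_mul (2 ^ d)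
  have variance_bound := integral_sqrt_prod_setIntegral_sub_le (ι := Fin d) hρ.nonneg hinv
  rw [setIntegral_sqrt_setIntegral_Iio, Fintype.card_fin] at variance_bound
  simp only [← averageL1Discrepancy_eq, mul_left_comm (2 ^ d : ℝ), ← mul_assoc]
    at normalized_tendsto
  rw [normalized_tendsto.limsup_eq, mul_pow, mul_assoc]
  gcongr

end UnitCube

section OptimalDensity

/-- The sampling density `ρ*` on `[0, 1]` that is optimal for `p = 1`. By the trigonometric solution
of the cubic, it is the inverse of `s ↦ (s - 2) ^ 2 * (s + 1) / 4` as a map from `[0, 2]` to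
`[0, 1]`. -/
noncomputable def optimalDensity (t : ℝ) : ℝ :=
  1 + 2 * Real.cos ((1 / 3) * Real.arccos (2 * t - 1) + 4 * π / 3)

lemma continuous_optimalDensity : Continuous optimalDensity := by
  unfold optimalDensity
  fun_prop

lemma optimalDensity_eq (t : ℝ) :
    optimalDensity t = 1 + 2 * Real.cos ((2 * π - Real.arccos (2 * t - 1)) / 3) := by
  rw [optimalDensity, ← Real.cos_two_pi_sub]
  ring_nf

lemma optimalDensity_nonneg (t : ℝ) : 0 ≤ optimalDensity t := by
  have cos_ge : Real.cos (π - π / 3) ≤ Real.cos ((2 * π - Real.arccos (2 * t - 1)) / 3) :=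
    Real.cos_le_cos_of_nonneg_of_le_pi (by linarith [Real.arccos_le_pi (2 * t - 1), Real.pi_pos])
      (by linarith [Real.pi_pos]) (by linarith [Real.arccos_nonneg (2 * t - 1)])
  rw [Real.cos_pi_sub, Real.cos_pi_div_three] at cos_ge
  rw [optimalDensity_eq]
  linarith

lemma optimalDensity_le_two (t : ℝ) : optimalDensity t ≤ 2 := by
  have cos_le : Real.cos ((2 * π - Real.arccos (2 * t - 1)) / 3) ≤ Real.cos (π / 3) :=
    Real.cos_le_cos_of_nonneg_of_le_pi (by linarith [Real.pi_pos])
      (by linarith [Real.arccos_nonneg (2 * t - 1), Real.pi_pos])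
      (by linarith [Real.arccos_le_pi (2 * t - 1)])
  rw [Real.cos_pi_div_three] at cos_le
  rw [optimalDensity_eq]
  linarith

variable {t x : ℝ}

lemma optimalDensity_cubic (ht : t ∈ Icc 0 1) :
    (optimalDensity t - 2) ^ 2 * (optimalDensity t + 1) / 4 = t := by
  have triple_angle := Real.cos_three_mul ((2 * π - Real.arccos (2 * t - 1)) / 3)
  rw [mul_div_cancel₀ _ three_ne_zero, Real.cos_two_pi_sub,
    Real.cos_arccos (by linarith [ht.1]) (by linarith [ht.2])] at triple_angle
  rw [optimalDensity_eq]
  linear_combination -(1 / 2) * triple_angle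

lemma optimalDensity_zero : optimalDensity 0 = 2 := by
  have cubic := optimalDensity_cubic (left_mem_Icc.2 zero_le_one)
  have factors : (optimalDensity 0 - 2) ^ 2 = 0 ∨ optimalDensity 0 + 1 = 0 :=
    mul_eq_zero.1 (by linarith)
  rcases factors with h | h
  · exact sub_eq_zero.1 (pow_eq_zero_iff two_ne_zero |>.1 h)
  · linarith [optimalDensity_nonneg 0]

lemma optimalDensity_pos (ht : t ∈ Ico 0 1) : 0 < optimalDensity t := by
  refine (optimalDensity_nonneg t).lt_of_ne' fun h ↦ ht.2.ne ?_
  have cubic := optimalDensity_cubic (Ico_subset_Icc_self ht)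
  rw [h] at cubic
  linarith

lemma optimalDensity_one : optimalDensity 1 = 0 := by
  have cubic := optimalDensity_cubic (right_mem_Icc.2 zero_le_one)
  have factors : optimalDensity 1 ^ 2 * (optimalDensity 1 - 3) = 0 := by
    linear_combination 4 * cubic
  rcases mul_eq_zero.1 factors with h | h
  · exact pow_eq_zero_iff two_ne_zero |>.1 h
  · linarith [optimalDensity_le_two 1]

lemma optimalDensity_lt_two (ht : t ∈ Ioc 0 1) : optimalDensity t < 2 := by
  refine (optimalDensity_le_two t).lt_of_ne fun h ↦ ht.1.ne ?_
  have cubic := optimalDensity_cubic (Ioc_subset_Icc_self ht)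
  rw [h] at cubic
  linarith

lemma hasDerivAt_optimalDensity (ht : t ∈ Ioo 0 1) :
    HasDerivAt optimalDensity (3 / 4 * optimalDensity t * (optimalDensity t - 2))⁻¹ t := by
  have cubic_deriv (s : ℝ) :
      HasDerivAt (fun s : ℝ ↦ (s - 2) ^ 2 * (s + 1) / 4) (3 / 4 * s * (s - 2)) s := by
    refine ((((hasDerivAt_id s).sub_const 2).pow 2).mul
      ((hasDerivAt_id s).add_const 1) |>.div_const 4).congr_deriv ?_
    simp only [id, Pi.pow_apply]
    ring
  have deriv_ne_zero : 3 / 4 * optimalDensity t * (optimalDensity t - 2) ≠ 0 := by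
    have pos := optimalDensity_pos (Ioo_subset_Ico_self ht)
    have lt_two := optimalDensity_lt_two (Ioo_subset_Ioc_self ht)
    exact mul_ne_zero (by positivity) (sub_ne_zero.2 lt_two.ne)
  refine .of_local_left_inverse continuous_optimalDensity.continuousAt (cubic_deriv _)
    deriv_ne_zero ?_
  filter_upwards [Ioo_mem_nhds ht.1 ht.2] with s hs
  exact optimalDensity_cubic (Ioo_subset_Icc_self hs)

lemma hasDerivAt_inv_optimalDensity_primitive (ht : t ∈ Ioo 0 1) :
    HasDerivAt (fun s ↦ 3 / 8 * (2 - optimalDensity s) ^ 2) (optimalDensity t)⁻¹ t := by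
  have pos := optimalDensity_pos (Ioo_subset_Ico_self ht)
  have sub_two_ne_zero := sub_ne_zero.2 (optimalDensity_lt_two (Ioo_subset_Ioc_self ht)).ne
  refine ((((hasDerivAt_optimalDensity ht).const_sub 2).pow 2).const_mul (3 / 8)).congr_deriv ?_
  field_simp
  ring

lemma hasDerivAt_optimalDensity_primitive (ht : t ∈ Ioo 0 1) :
    HasDerivAt (fun s ↦ 3 / 16 * optimalDensity s ^ 4 - 1 / 2 * optimalDensity s ^ 3)
      (optimalDensity t) t := by
  have pos := optimalDensity_pos (Ioo_subset_Ico_self ht)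
  have sub_two_ne_zero := sub_ne_zero.2 (optimalDensity_lt_two (Ioo_subset_Ioc_self ht)).ne
  have deriv := hasDerivAt_optimalDensity ht
  refine (((deriv.pow 4).const_mul (3 / 16)).sub ((deriv.pow 3).const_mul (1 / 2))).congr_deriv ?_
  field_simp
  ring

lemma integrableOn_inv_optimalDensity :
    IntegrableOn (fun t ↦ (optimalDensity t)⁻¹) (Icc 0 1) := by
  have := continuous_optimalDensity
  rw [integrableOn_Icc_iff_integrableOn_Ioc]
  exact intervalIntegral.integrableOn_deriv_of_nonneg
    (g := fun s ↦ 3 / 8 * (2 - optimalDensity s) ^ 2) (by fun_prop)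
    (fun t ht ↦ hasDerivAt_inv_optimalDensity_primitive ht)
    fun t _ ↦ inv_nonneg.2 (optimalDensity_nonneg t)

lemma integral_inv_optimalDensity (hx : x ∈ Icc 0 1) :
    ∫ t in 0..x, (optimalDensity t)⁻¹ = 3 / 8 * (2 - optimalDensity x) ^ 2 := by
  have := continuous_optimalDensity
  have inv_intervalIntegrable : IntervalIntegrable (fun t ↦ (optimalDensity t)⁻¹) volume 0 x :=
    (intervalIntegrable_iff_integrableOn_Icc_of_le hx.1).2
      (integrableOn_inv_optimalDensity.mono_set (Icc_subset_Icc_right hx.2))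
  rw [intervalIntegral.integral_eq_sub_of_hasDerivAt_of_le hx.1
    (f := fun s ↦ 3 / 8 * (2 - optimalDensity s) ^ 2) (by fun_prop)
    (fun t ht ↦ hasDerivAt_inv_optimalDensity_primitive ⟨ht.1, ht.2.trans_le hx.2⟩)
    inv_intervalIntegrable, optimalDensity_zero]
  ring

lemma integral_optimalDensity : ∫ t in Icc 0 1, optimalDensity t = 1 := by
  have := continuous_optimalDensity
  rw [integral_Icc_eq_integral_Ioc, ← intervalIntegral.integral_of_le zero_le_one,
    intervalIntegral.integral_eq_sub_of_hasDerivAt_of_le zero_le_one (by fun_prop)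
      (fun t ht ↦ hasDerivAt_optimalDensity_primitive ht) (this.intervalIntegrable 0 1),
    optimalDensity_zero, optimalDensity_one]
  norm_num

lemma isSamplingDensity_optimalDensity :
    IsSamplingDensity (volume.restrict (Icc 0 1)) optimalDensity where
  measurable := continuous_optimalDensity.measurable
  nonneg := optimalDensity_nonneg
  ae_pos := by
    rw [← restrict_Ico_eq_restrict_Icc]
    exact ae_restrict_of_forall_mem measurableSet_Ico fun t ht ↦ optimalDensity_pos ht
  integral_eq_one := integral_optimalDensity

lemma integral_sqrt_integral_inv_optimalDensity :
    ∫ x in Icc 0 1, √(∫ t in 0..x, (optimalDensity t)⁻¹) = √(3 / 8) := by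
  have sqrt_eq : EqOn (fun x ↦ √(∫ t in 0..x, (optimalDensity t)⁻¹))
      (fun x ↦ √(3 / 8) * (2 - optimalDensity x)) (Icc 0 1) := fun x hx ↦ by
    simp only [integral_inv_optimalDensity hx]
    rw [Real.sqrt_mul (by norm_num), Real.sqrt_sq (sub_nonneg.2 (optimalDensity_le_two x))]
  rw [setIntegral_congr_fun measurableSet_Icc sqrt_eq, integral_const_mul,
    integral_sub (integrable_const _) isSamplingDensity_optimalDensity.integrable,
    integral_optimalDensity]
  norm_num

end OptimalDensity

lemma two_mul_sqrt_three_div_eight_pow (d : ℕ) :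
    (2 * √(3 / 8 : ℝ)) ^ d = (3 / 2 : ℝ) ^ ((d : ℝ) / 2) := by
  have base_eq : 2 * √(3 / 8 : ℝ) = √(3 / 2) := by
    rw [show (3 / 2 : ℝ) = 2 ^ 2 * (3 / 8) by norm_num, Real.sqrt_mul (by norm_num),
      Real.sqrt_sq zero_le_two]
  rw [base_eq, Real.sqrt_eq_rpow, ← Real.rpow_mul_natCast (by norm_num)]
  ring_nf

/-- For the optimal density for `p = 1`,
`ρ*(t) = 1 + 2cos((1/3)arccos(2t-1) + 4π/3)`, and i.i.d. points from the
product density with weights `a_k = 1/(N ρ_d*(t_k))`,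
`limsup_N N^{1/2} 2^d E[∫|Δ|] ≤ √(2/π) (3/2)^{d/2}`. -/
theorem limsup_normalized_average_L1_discrepancy_optimal
    (d : ℕ)
    (ρstar : ℝ → ℝ)
    (hρ : ∀ t, ρstar t = 1 + 2 * Real.cos ((1 / 3) * Real.arccos (2 * t - 1)
        + 4 * Real.pi / 3)) :
    Filter.limsup
      (fun N : ℕ =>
        (N : ℝ) ^ ((1 : ℝ) / 2) * 2 ^ d *
          ∫ T in Set.Icc (0 : Fin N → Fin d → ℝ) 1,
            (∏ k, ∏ j, ρstar (T k j)) *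
              ∫ x in Set.Icc (0 : Fin d → ℝ) 1,
                |(∑ k, (1 / (N * ∏ j, ρstar (T k j))) *
                    (if ∀ j, T k j < x j then (1 : ℝ) else 0)) - ∏ j, x j|)
      atTop
      ≤ Real.sqrt (2 / Real.pi) * (3 / 2 : ℝ) ^ ((d : ℝ) / 2) := by
  obtain rfl : ρstar = optimalDensity := funext hρ
  have limsup_le := limsup_normalized_averageL1Discrepancy_le isSamplingDensity_optimalDensity
    integrableOn_inv_optimalDensity d
  rw [integral_sqrt_integral_inv_optimalDensity, two_mul_sqrt_three_div_eight_pow] at limsup_le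
  simp only [Real.sqrt_eq_rpow] at limsup_le ⊢
  exact limsup_le
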